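/- arXiv:1404.5019 — 3 statements merged into one kernel-verified Lean document; each statement's English description precedes it below -/
import Mathlib

section
/- (Theorem 1) Let d₁, …, d_{M_s} be real numbers (positions of the active antennas in wavelengths) and let θ₁, …, θ_Q ∈ (−π/2, π/2] be Q distinct angles. Define the M_s² × Q complex matrix G whose entry indexed by the pair (i, j) ∈ {1,…,M_s}² and column q ∈ {1,…,Q} is exp(2πi·(d_i − d_j)·sin θ_q). Suppose there exist a real number d with 0 < d ≤ 1/2, a real number d̄, and an integer N_v ≥ Q such that for every k ∈ {0, 1, …, N_v − 1} there exist indices i, j ∈ {1,…,M_s} with d_i − d_j = d̄ + k·d. Then G has full column rank Q, i.e., rank G = Q. -/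
/-!
The rows of `G` whose position differences run through the progression `d̄ + k d` form a Vandermonde
matrix in the nodes `exp (2πi d sin θ_q)`, its columns scaled by the units `exp (2πi d̄ sin θ_q)`.
Since `sin` is injective on `(-π/2, π/2]` with values in `(-1, 1]`, the bound `d ≤ 1/2` confines
`d sin θ_q` to a half-open interval of length one, on which `t ↦ exp (2πi t)` is injective; so the
nodes are distinct and the columns are linearly independent.
-/

open Complex Set

theorem rank_eq_card_of_linearIndependent_col {m n R : Type*} [Fintype n] [CommRing R]
    [Nontrivial R] {A : Matrix m n R} (hA : LinearIndependent R A.col) :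
    A.rank = Fintype.card n := by
  rw [Matrix.rank_eq_finrank_span_cols, finrank_span_eq_card hA]

section GeometricRows

variable {m n R : Type*} [Fintype n] [CommRing R] [IsDomain R]

theorem eq_zero_of_forall_lt_card_sum_mul_pow_eq_zero {x v : n → R} (hx : Function.Injective x)
    (hv : ∀ k < Fintype.card n, ∑ q, v q * x q ^ k = 0) : v = 0 := by
  let e := (Fintype.equivFin n).symm
  have hve : v ∘ e = 0 := by
    refine Matrix.eq_zero_of_forall_pow_sum_mul_pow_eq_zero (hx.comp e.injective) fun k => ?_
    exact (e.sum_comp fun q => v q * x q ^ (k : ℕ)).trans (hv k k.is_lt)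
  exact e.surjective.injective_comp_right hve

theorem linearIndependent_col_of_geometric_rows {A : Matrix m n R} {x c : n → R}
    (hx : Function.Injective x) (hc : ∀ q, c q ≠ 0)
    (hA : ∀ k < Fintype.card n, ∃ r, ∀ q, A r q = c q * x q ^ k) :
    LinearIndependent R A.col := by
  rw [Fintype.linearIndependent_iff]
  intro v hv q
  have hvc : (fun q => v q * c q) = 0 := by
    refine eq_zero_of_forall_lt_card_sum_mul_pow_eq_zero hx fun k hk => ?_
    obtain ⟨r, hr⟩ := hA k hk
    calc ∑ q, v q * c q * x q ^ k = (∑ q, v q • A.col q) r := by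
          simp [hr, mul_assoc]
      _ = 0 := congrFun hv r
  exact (mul_eq_zero.1 (congrFun hvc q)).resolve_right (hc q)

end GeometricRows

theorem injOn_exp_two_pi_I_mul_Ioc (a : ℝ) :
    InjOn (fun t : ℝ => exp (2 * Real.pi * I * t)) (Ioc a (a + 1)) := by
  intro s hs t ht hst
  obtain ⟨k, hk⟩ := exp_eq_exp_iff_exists_int.1 hst
  have hst_add : s = t + k := by
    have : (2 * Real.pi * I) * s = (2 * Real.pi * I) * (t + k) := by linear_combination hk
    exact_mod_cast mul_left_cancel₀ two_pi_I_ne_zero this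
  have k_lt_one : k < 1 := by
    have : (k : ℝ) < 1 := by linarith [hs.2, ht.1]
    exact_mod_cast this
  have neg_one_lt_k : -1 < k := by
    have : (-1 : ℝ) < k := by linarith [hs.1, ht.2]
    exact_mod_cast this
  have k_eq_zero : k = 0 := by lia
  simpa [k_eq_zero] using hst_add

theorem mapsTo_sin_Ioc : MapsTo Real.sin (Ioc (-(Real.pi / 2)) (Real.pi / 2)) (Ioc (-1) 1) := by
  intro t ht
  refine ⟨?_, Real.sin_le_one t⟩
  simpa using Real.sin_lt_sin_of_lt_of_le_pi_div_two le_rfl ht.2 ht.1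

theorem injOn_exp_two_pi_I_mul_sin {d : ℝ} (hd0 : 0 < d) (hd : d ≤ 1 / 2) :
    InjOn (fun t : ℝ => exp (2 * Real.pi * I * d * Real.sin t))
      (Ioc (-(Real.pi / 2)) (Real.pi / 2)) := by
  have hmaps : MapsTo (fun t => d * Real.sin t) (Ioc (-(Real.pi / 2)) (Real.pi / 2))
      (Ioc (-(1 / 2)) (-(1 / 2) + 1)) := by
    intro t ht
    obtain ⟨hlt, hle⟩ := mapsTo_sin_Ioc ht
    constructor <;> nlinarith
  have hinj : InjOn (fun t => d * Real.sin t) (Ioc (-(Real.pi / 2)) (Real.pi / 2)) :=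
    (mul_right_injective₀ hd0.ne').comp_injOn (Real.injOn_sin.mono Ioc_subset_Icc_self)
  simpa [Function.comp_def, mul_assoc] using
    (injOn_exp_two_pi_I_mul_Ioc _).comp hinj hmaps

theorem khatriRao_full_column_rank_of_arith_diff_general {ι κ : Type*} [Fintype κ]
    (pos : ι → ℝ) (u : κ → ℝ) (d dbar : ℝ)
    (hinj : Function.Injective fun q => exp (2 * Real.pi * I * d * u q))
    (harith : ∀ k : ℕ, k < Fintype.card κ → ∃ i j, pos i - pos j = dbar + k * d)
    (G : Matrix (ι × ι) κ ℂ)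
    (hG : ∀ i j q, G (i, j) q = exp (2 * Real.pi * I * (pos i - pos j) * u q)) :
    G.rank = Fintype.card κ := by
  refine rank_eq_card_of_linearIndependent_col <| linearIndependent_col_of_geometric_rows
    (c := fun q => exp (2 * Real.pi * I * dbar * u q)) hinj (fun _ => exp_ne_zero _) fun k hk => ?_
  obtain ⟨i, j, hij⟩ := harith k hk
  have hij_complex : (pos i : ℂ) - pos j = dbar + k * d := by exact_mod_cast hij
  refine ⟨(i, j), fun q => ?_⟩
  rw [hG, hij_complex, ← exp_nat_mul, ← exp_add]
  ring_nf

/-- **Theorem 1.** If the antenna-position difference set `{dᵢ − dⱼ}` contains an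
arithmetic sequence of `N_v ≥ Q` terms with common difference `0 < d ≤ 1/2`, and the
`Q` investigated angles are distinct and lie in `(-π/2, π/2]`, then the Khatri-Rao
matrix `G = B* ⊙ B`, with entries `G (i,j) q = exp(2πi(dᵢ − dⱼ)sin θ_q)`, has full
column rank `Q`. -/
theorem khatriRao_full_column_rank_of_arith_diff
    (Ms Q : ℕ) (dd : Fin Ms → ℝ) (θ : Fin Q → ℝ)
    (hθmem : ∀ q, θ q ∈ Set.Ioc (-(Real.pi / 2)) (Real.pi / 2))
    (hθinj : Function.Injective θ)
    (d dbar : ℝ) (hd0 : 0 < d) (hd : d ≤ 1 / 2)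
    (Nv : ℕ) (hNv : Q ≤ Nv)
    (harith : ∀ k : ℕ, k < Nv → ∃ i j : Fin Ms, dd i - dd j = dbar + k * d)
    (G : Matrix (Fin Ms × Fin Ms) (Fin Q) ℂ)
    (hG : ∀ i j q, G (i, j) q
        = Complex.exp (2 * Real.pi * Complex.I * (dd i - dd j) * Real.sin (θ q))) :
    G.rank = Q := by
  have hinj : Function.Injective fun q => exp (2 * Real.pi * I * d * Real.sin (θ q)) :=
    fun p q h => hθinj (injOn_exp_two_pi_I_mul_sin hd0 hd (hθmem p) (hθmem q) h)
  simpa using khatriRao_full_column_rank_of_arith_diff_general dd (fun q => Real.sin (θ q)) d dbar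
    hinj (fun k hk => harith k (hk.trans_le (by simpa using hNv))) G hG
end

section
/- (Theorem 2) Let Q be a positive integer, let d₁, …, d_{M_s} be real numbers, and define the investigated angles θ_q = arcsin((2/Q)·(q − 1 − ⌈(Q−1)/2⌉)) for q = 1, …, Q. Define the M_s² × Q complex matrix G whose entry indexed by the pair (i, j) ∈ {1,…,M_s}² and column q is exp(2πi·(d_i − d_j)·sin θ_q) = exp(i·(4π/Q)·(d_i − d_j)·(q − 1 − ⌈(Q−1)/2⌉)). If the set {(d_i − d_j) mod (Q/2) : i, j ∈ {1,…,M_s}} contains at least Q distinct values, then G has full column rank Q. -/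
/-!
Sampling `exp(2πiδx)` at equally spaced points `x = (q - c) / T` turns the row of frequency `δ` into
a nonzero multiple of the geometric progression with ratio `exp(2πiδ/T)`, and this ratio determines
`δ` modulo `T`. Hence `Q` rows with frequencies distinct modulo `T` form a row-scaled Vandermonde
matrix with distinct nodes. The grid `θ` makes the `sin θ_q` equally spaced with `T = Q / 2`: its
arguments lie in `[-1, 1]`, so the sine undoes the arcsine.
-/

theorem rank_eq_card_of_det_submatrix_ne_zero {m n R : Type*} [Fintype n] [DecidableEq n]
    [CommRing R] [IsDomain R] (A : Matrix m n R) (p : n → m) (hdet : (A.submatrix p id).det ≠ 0) :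
    A.rank = Fintype.card n := by
  have hrank : (A.submatrix p id).rank = Fintype.card n := by
    rw [Matrix.rank_eq_finrank_span_cols]
    exact finrank_span_eq_card (Matrix.linearIndependent_cols_of_det_ne_zero hdet)
  exact A.rank_le_card_width.antisymm (hrank ▸ A.rank_submatrix_le p id)

theorem rank_eq_of_row_scaled_vandermonde {m R : Type*} [CommRing R] [IsDomain R] {n : ℕ}
    {A : Matrix m (Fin n) R} {w x : m → R} (hA : ∀ r j, A r j = w r * x r ^ (j : ℕ))
    {p : Fin n → m} (hw : ∀ k, w (p k) ≠ 0) (hx : Function.Injective (x ∘ p)) :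
    A.rank = n := by
  have hsub : A.submatrix p id = Matrix.diagonal (w ∘ p) * Matrix.vandermonde (x ∘ p) := by
    ext k j
    simp [hA, Matrix.diagonal_mul]
  have hdet : (A.submatrix p id).det ≠ 0 := by
    rw [hsub, Matrix.det_mul, Matrix.det_diagonal]
    exact mul_ne_zero (Finset.prod_ne_zero_iff.mpr fun k _ => hw k)
      (Matrix.det_vandermonde_ne_zero_iff.mpr hx)
  simpa using rank_eq_card_of_det_submatrix_ne_zero A p hdet

section EquallySpacedSampling

open Complex

theorem exp_two_pi_mul_I_mul_div_eq_iff_modEq {T : ℝ} (hT : T ≠ 0) {a b : ℝ} :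
    exp (2 * Real.pi * I * a / T) = exp (2 * Real.pi * I * b / T) ↔ AddCommGroup.ModEq T a b := by
  have exp_eq_toCircle (t : ℝ) :
      exp (2 * Real.pi * I * t / T) = AddCircle.toCircle (t : AddCircle T) := by
    rw [AddCircle.toCircle_apply_mk, Circle.coe_exp]
    push_cast
    ring_nf
  rw [exp_eq_toCircle, exp_eq_toCircle, Circle.coe_inj, (AddCircle.injective_toCircle hT).eq_iff]
  exact AddCommGroup.modEq_iff_eq_mod_zmultiples.symm

theorem rank_eq_of_equally_spaced_exp_samples {m : Type*} {n : ℕ} {T : ℝ} (hT : T ≠ 0) (c : ℝ)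
    {δ : m → ℝ} {A : Matrix m (Fin n) ℂ}
    (hA : ∀ r j, A r j = exp (2 * Real.pi * I * δ r * (((j : ℝ) - c) / T : ℝ)))
    {p : Fin n → m} (hp : Pairwise fun k l => ¬ AddCommGroup.ModEq T (δ (p k)) (δ (p l))) :
    A.rank = n := by
  let node (r : m) : ℂ := exp (2 * Real.pi * I * δ r / T)
  let weight (r : m) : ℂ := exp (-(2 * Real.pi * I * δ r * c / T))
  have hA_eq (r : m) (j : Fin n) : A r j = weight r * node r ^ (j : ℕ) := by
    rw [hA, ← exp_nat_mul, ← exp_add]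
    push_cast
    ring_nf
  have hnode : Function.Injective (node ∘ p) :=
    Function.injective_iff_pairwise_ne.mpr fun k l hkl h =>
      hp hkl ((exp_two_pi_mul_I_mul_div_eq_iff_modEq hT).mp h)
  exact rank_eq_of_row_scaled_vandermonde hA_eq (fun k => exp_ne_zero _) hnode

end EquallySpacedSampling

theorem two_mul_ceil_sub_one_div_two_mem_Icc (n : ℤ) :
    2 * ⌈((n : ℝ) - 1) / 2⌉ ∈ Set.Icc (n - 1) n := by
  have hle := Int.le_ceil (((n : ℝ) - 1) / 2)
  have hlt := Int.ceil_lt_add_one (((n : ℝ) - 1) / 2)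
  have hlower : n - 1 ≤ 2 * ⌈((n : ℝ) - 1) / 2⌉ := by
    exact_mod_cast (by linarith : (n : ℝ) - 1 ≤ 2 * ⌈((n : ℝ) - 1) / 2⌉)
  have hupper : 2 * ⌈((n : ℝ) - 1) / 2⌉ < n + 1 := by
    exact_mod_cast (by linarith : (2 * ⌈((n : ℝ) - 1) / 2⌉ : ℝ) < n + 1)
  exact ⟨hlower, Int.lt_add_one_iff.mp hupper⟩

theorem sin_arcsin_inverse_sinusoidal_grid {Q : ℕ} (q : Fin Q) :
    Real.sin (Real.arcsin ((2 / Q) * ((q : ℝ) - (⌈((Q : ℝ) - 1) / 2⌉ : ℤ)))) =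
      ((q : ℝ) - (⌈((Q : ℝ) - 1) / 2⌉ : ℤ)) / (Q / 2) := by
  obtain ⟨hlower, hupper⟩ := two_mul_ceil_sub_one_div_two_mem_Icc Q
  rw [Int.cast_natCast] at hlower hupper
  set c : ℤ := ⌈((Q : ℝ) - 1) / 2⌉
  have hQ : (0 : ℝ) < Q := by exact_mod_cast q.pos
  have hq : (q : ℤ) < Q := by exact_mod_cast q.isLt
  have hge : (-Q : ℝ) ≤ 2 * (q - c) := by
    exact_mod_cast (by lia : (-Q : ℤ) ≤ 2 * (q - c))
  have hle : 2 * ((q : ℝ) - c) ≤ Q := by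
    exact_mod_cast (by lia : 2 * ((q : ℤ) - c) ≤ Q)
  have hspacing : (2 / Q) * ((q : ℝ) - c) = (q - c) / (Q / 2) := by field_simp
  rw [hspacing, Real.sin_arcsin]
  · rw [le_div_iff₀ (by positivity)]
    linarith
  · rw [div_le_iff₀ (by positivity)]
    linarith

theorem khatriRao_full_column_rank_of_distinct_mod_general {m : Type*} {Q : ℕ} (hQ : 0 < Q)
    (δ : m → ℝ) {θ : Fin Q → ℝ}
    (hθ : ∀ q : Fin Q,
      θ q = Real.arcsin ((2 / Q) * ((q : ℝ) - (⌈((Q : ℝ) - 1) / 2⌉ : ℤ))))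
    {G : Matrix m (Fin Q) ℂ}
    (hG : ∀ r q, G r q = Complex.exp (2 * Real.pi * Complex.I * δ r * Real.sin (θ q)))
    (hdiff : ∃ p : Fin Q → m, ∀ q q' : Fin Q, q ≠ q' →
      ¬ AddCommGroup.ModEq ((Q : ℝ) / 2) (δ (p q)) (δ (p q'))) :
    G.rank = Q := by
  obtain ⟨p, hp⟩ := hdiff
  have hT : (Q : ℝ) / 2 ≠ 0 := by positivity
  refine rank_eq_of_equally_spaced_exp_samples hT (⌈((Q : ℝ) - 1) / 2⌉ : ℤ) (fun r q => ?_) hp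
  rw [hG, hθ, sin_arcsin_inverse_sinusoidal_grid]

/-- **Theorem 2.** With the inverse sinusoidal angular grid
`θ_q = arcsin((2/Q)(q − 1 − ⌈(Q−1)/2⌉))`, if the antenna-position differences
`dᵢ − dⱼ` take at least `Q` distinct values modulo `Q/2`, then the Khatri-Rao
matrix `G`, with entries `G (i,j) q = exp(2πi(dᵢ − dⱼ)sin θ_q)`, has full column
rank `Q`. -/
theorem khatriRao_full_column_rank_of_distinct_mod
    (Ms Q : ℕ) (hQ : 0 < Q) (dd : Fin Ms → ℝ) (θ : Fin Q → ℝ)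
    (hθ : ∀ q : Fin Q,
      θ q = Real.arcsin ((2 / Q) * ((q : ℝ) - (⌈((Q : ℝ) - 1) / 2⌉ : ℤ))))
    (G : Matrix (Fin Ms × Fin Ms) (Fin Q) ℂ)
    (hG : ∀ i j q, G (i, j) q
        = Complex.exp (2 * Real.pi * Complex.I * (dd i - dd j) * Real.sin (θ q)))
    (hdiff : ∃ p : Fin Q → Fin Ms × Fin Ms, ∀ q q' : Fin Q, q ≠ q' →
      ¬ AddCommGroup.ModEq ((Q : ℝ) / 2)
          (dd (p q).1 - dd (p q).2) (dd (p q').1 - dd (p q').2)) :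
    G.rank = Q := by
  exact khatriRao_full_column_rank_of_distinct_mod_general hQ (fun r => dd r.1 - dd r.2) hθ
    (fun r q => by simpa using hG r.1 r.2 q) hdiff
end

section
/- Let N ≥ 2 and let S ⊆ {0, 1, …, N−1} be a set of row indices such that for every k ∈ {0, 1, …, N−1} there exist elements i, j ∈ S with i − j = k (i.e., S is a length-(N−1) sparse ruler). Let C be the |S| × N selection matrix formed by the rows of the identity matrix I_N whose indices lie in S, and let T be the N² × (2N−1) repetition matrix whose i-th row (1 ≤ i ≤ N²) equals the (((i−1+(N−2)⌊(i−1)/N⌋) mod (2N−1)) + 1)-th row of I_{2N−1}. Then the |S|² × (2N−1) matrix R = (C ⊗ C)·T has full column rank 2N−1. -/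
/-!
Multiplying by a matrix whose rows are rows of the identity selects rows. Hence every row of
`(C ⊗ C) T` is a row of `I_{2N-1}`, and the row labelled `(a, b)` is the one of index
`a + bN + (N - 2)b ≡ a - b (mod 2N - 1)`. The differences of a sparse ruler run through
`-(N - 1), …, N - 1`, a complete residue system modulo `2N - 1`, so every row of `I_{2N-1}` occurs;
repeating or permuting rows does not change the rank.
-/

open Matrix
open scoped Kronecker

section Selection

variable {k l m n o R : Type*}

theorem rank_submatrix_id_of_surjective [CommSemiring R] [Fintype o] (A : Matrix m o R)
    {f : l → m} (hf : Function.Surjective f) : (A.submatrix f id).rank = A.rank := by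
  have hcomp : (A.submatrix f id).mulVecLin = LinearMap.funLeft R R f ∘ₗ A.mulVecLin := rfl
  have hinj := LinearMap.funLeft_injective_of_surjective R R f hf
  rw [Matrix.rank, Matrix.rank, hcomp, LinearMap.range_comp]
  exact (Submodule.equivMapOfInjective _ hinj _).finrank_eq.symm

theorem one_submatrix_kronecker_one_submatrix_mul [NonAssocSemiring R] [Fintype m] [DecidableEq m]
    [Fintype n] [DecidableEq n] (f : k → m) (g : l → n) (M : Matrix (m × n) o R) :
    ((1 : Matrix m m R).submatrix f id ⊗ₖ (1 : Matrix n n R).submatrix g id) * M =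
      M.submatrix (Prod.map f g) id := by
  rw [kroneckerMap_submatrix_submatrix, one_kronecker_one, Prod.map_id]
  exact one_submatrix_mul _ (Equiv.refl _) M

end Selection

section SparseRuler

variable {N : ℕ}

/-- The row of `I_{2N-1}` that the repetition matrix `T` carries at `p = (a, b)`, counted from
zero. The pair stands for position `bN + a` in the column-by-column vectorization of an `N × N`
matrix, so `a` is the row and `b` the column. -/
def lagIndex (p : Fin N × Fin N) : Fin (2 * N - 1) :=
  ⟨((p.2.val * N + p.1.val) + (N - 2) * ((p.2.val * N + p.1.val) / N)) % (2 * N - 1),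
    Nat.mod_lt _ (by have := p.1.pos; omega)⟩

theorem coe_lagIndex_eq_sub_emod (hN : 2 ≤ N) (p : Fin N × Fin N) :
    ((lagIndex p : ℕ) : ℤ) = ((p.1 : ℤ) - p.2) % (2 * N - 1 : ℕ) := by
  have hdiv : (p.2.val * N + p.1.val) / N = p.2 := by
    rw [Nat.mul_comm, Nat.mul_add_div p.1.pos, Nat.div_eq_of_lt p.1.isLt, Nat.add_zero]
  have hlag : (((p.2 * N + p.1) + (N - 2) * p.2 : ℕ) : ℤ) =
      ((p.1 : ℤ) - p.2) + (2 * N - 1 : ℕ) * p.2 := by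
    push_cast [hN, show 1 ≤ 2 * N by omega]
    ring
  simp only [lagIndex, hdiv]
  rw [Int.natCast_mod, hlag, Int.add_mul_emod_self_left]

/-- A sparse ruler of length `N - 1`: the marks `S ⊆ {0, …, N - 1}` measure every distance
`0, …, N - 1`. The equation `i = j + k` expresses `i - j = k` without truncated subtraction. -/
def IsSparseRuler (S : Finset (Fin N)) : Prop :=
  ∀ k : ℕ, k < N → ∃ i ∈ S, ∃ j ∈ S, (i : ℕ) = (j : ℕ) + k

namespace IsSparseRuler

variable {S : Finset (Fin N)}

theorem exists_sub_eq (hS : IsSparseRuler S) {d : ℤ} (hd : d.natAbs < N) :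
    ∃ i ∈ S, ∃ j ∈ S, (i : ℤ) - j = d := by
  obtain ⟨i, hi, j, hj, hij⟩ := hS d.natAbs hd
  rcases le_total 0 d with hd_nonneg | hd_nonpos
  · exact ⟨i, hi, j, hj, by omega⟩
  · exact ⟨j, hj, i, hi, by omega⟩

theorem surjective_lagIndex (hS : IsSparseRuler S) (hN : 2 ≤ N) :
    Function.Surjective
      (lagIndex ∘ Prod.map Subtype.val Subtype.val : S × S → Fin (2 * N - 1)) := by
  intro r
  have hbmod : ((r : ℤ).bmod (2 * N - 1)).natAbs < N := by
    have hlower := Int.le_bmod (x := r) (m := 2 * N - 1) (by omega)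
    have hupper := Int.bmod_lt (x := r) (m := 2 * N - 1) (by omega)
    omega
  obtain ⟨i, hi, j, hj, hij⟩ := hS.exists_sub_eq hbmod
  refine ⟨(⟨i, hi⟩, ⟨j, hj⟩), Fin.ext (Int.natCast_inj.mp ?_)⟩
  calc ((lagIndex (i, j) : ℕ) : ℤ)
      = ((i : ℤ) - j) % (2 * N - 1 : ℕ) := coe_lagIndex_eq_sub_emod hN (i, j)
    _ = (r : ℤ) % (2 * N - 1 : ℕ) := by rw [hij, Int.bmod_emod]
    _ = r := Int.emod_eq_of_lt (by omega) (by omega)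

end IsSparseRuler

theorem sparse_ruler_system_matrix_full_column_rank_general {R : Type*} [CommSemiring R]
    [StrongRankCondition R] (hN : 2 ≤ N) {S : Finset (Fin N)} (hS : IsSparseRuler S)
    {C : Matrix S (Fin N) R} (hC : ∀ u j, C u j = if j = u.1 then 1 else 0)
    {T : Matrix (Fin N × Fin N) (Fin (2 * N - 1)) R}
    (hT : ∀ p j, T p j = if j = lagIndex p then 1 else 0) :
    ((C ⊗ₖ C) * T).rank = 2 * N - 1 := by
  have hC_eq : C = (1 : Matrix (Fin N) (Fin N) R).submatrix Subtype.val id := by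
    ext u j
    simp [hC, one_apply, eq_comm]
  have hT_eq : T = (1 : Matrix (Fin (2 * N - 1)) (Fin (2 * N - 1)) R).submatrix lagIndex id := by
    ext p j
    simp [hT, one_apply, eq_comm]
  rw [hC_eq, one_submatrix_kronecker_one_submatrix_mul, hT_eq, submatrix_submatrix,
    Function.id_comp, rank_submatrix_id_of_surjective _ (hS.surjective_lagIndex hN), rank_one,
    Fintype.card_fin]

end SparseRuler

/-- If `S ⊆ {0, …, N−1}` is a length-`(N−1)` sparse ruler, `C` is the selection
matrix formed by the rows of `I_N` indexed by `S`, and `T` is the `N² × (2N−1)`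
repetition matrix whose `i`-th row is the `(((i−1+(N−2)⌊(i−1)/N⌋) mod (2N−1)) + 1)`-th
row of `I_{2N−1}`, then `R = (C ⊗ C)·T` has full column rank `2N−1`. -/
theorem sparse_ruler_system_matrix_full_column_rank (N : ℕ) (hN : 2 ≤ N)
    (S : Finset (Fin N))
    (hS : ∀ k : ℕ, k < N → ∃ i ∈ S, ∃ j ∈ S, (i : ℕ) = (j : ℕ) + k)
    (C : Matrix {i : Fin N // i ∈ S} (Fin N) ℝ)
    (hC : ∀ (u : {i : Fin N // i ∈ S}) (j : Fin N), C u j = if j = u.1 then 1 else 0)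
    (T : Matrix (Fin N × Fin N) (Fin (2 * N - 1)) ℝ)
    (hT : ∀ (p : Fin N × Fin N) (j : Fin (2 * N - 1)),
      T p j = if (j : ℕ) =
          ((p.2.val * N + p.1.val) + (N - 2) * ((p.2.val * N + p.1.val) / N)) % (2 * N - 1)
        then 1 else 0) :
    ((Matrix.kroneckerMap (· * ·) C C) * T).rank = 2 * N - 1 := by
  exact sparse_ruler_system_matrix_full_column_rank_general hN hS hC fun p j => by
    simp only [hT, lagIndex, Fin.ext_iff]
end
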